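/- arXiv:2512.18837 — 2 statements merged into one kernel-verified Lean document; each statement's English description precedes it below -/
import Mathlib

section
/- Let H be a real inner product space, Π the orthogonal projection onto a complete subspace of H, η ≥ 0, g : [0, ∞) → H, and y : [0, ∞) → ℝ differentiable. Assume for all t ≥ 0: (i) y′(t) ≤ −‖Π g(t)‖², (ii) y(t) ≤ ‖g(t)‖², and (iii) ‖g(t) − Π g(t)‖ ≤ η. Then for every t ≥ 0, y(t) ≤ y(0)·e^{−t} + η²·(1 − e^{−t}). -/
/-!
By Pythagoras and the tail bound, `‖Π g‖² ≥ ‖g‖² - η² ≥ y - η²`, so the dissipation inequality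
becomes `y′ ≤ -(y - η²)`. Grönwall's inequality then makes the excess of `y` over the noise floor
`η²` decay at rate one.
-/

section

open Set Real

theorem gronwallBound_neg_mul (δ K c x : ℝ) :
    gronwallBound δ K (-(K * c)) x = δ * exp (K * x) + c * (1 - exp (K * x)) := by
  rcases eq_or_ne K 0 with rfl | hK
  · simp [gronwallBound_K0]
  · rw [gronwallBound_of_K_ne_0 hK]
    field

theorem le_mul_exp_add_mul_one_sub_exp_of_deriv_right_le {f f' : ℝ → ℝ} {K c a b : ℝ}
    (hf : ContinuousOn f (Icc a b))
    (hf' : ∀ x ∈ Ico a b, HasDerivWithinAt f (f' x) (Ici x) x)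
    (bound : ∀ x ∈ Ico a b, f' x ≤ K * (f x - c)) :
    ∀ x ∈ Icc a b, f x ≤ f a * exp (K * (x - a)) + c * (1 - exp (K * (x - a))) := by
  intro x hx
  rw [← gronwallBound_neg_mul]
  refine le_gronwallBound_of_liminf_deriv_right_le hf
    (fun x hx _ hr ↦ (hf' x hx).liminf_right_slope_le hr) le_rfl (fun x hx ↦ ?_) x hx
  linarith [bound x hx]

variable {𝕜 H : Type*} [RCLike 𝕜] [NormedAddCommGroup H] [InnerProductSpace 𝕜 H]
  (K : Submodule 𝕜 H) [K.HasOrthogonalProjection]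

theorem norm_sq_le_of_norm_sub_orthogonalProjectionOnto_le {x : H} {η : ℝ}
    (h : ‖x - K.orthogonalProjectionOnto x‖ ≤ η) :
    ‖x‖ ^ 2 ≤ ‖(K.orthogonalProjectionOnto x : H)‖ ^ 2 + η ^ 2 := by
  calc ‖x‖ ^ 2
      = ‖(K.orthogonalProjectionOnto x : H)‖ ^ 2 + ‖x - K.orthogonalProjectionOnto x‖ ^ 2 := by
        rw [K.norm_sq_eq_add_norm_sq_starProjection x, K.starProjection_orthogonal_val,
          K.starProjection_apply]
    _ ≤ ‖(K.orthogonalProjectionOnto x : H)‖ ^ 2 + η ^ 2 := by gcongr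

theorem kswgd_truncated_convergence_general {η a b : ℝ} {g : ℝ → H} {y y' : ℝ → ℝ}
    (hy : ContinuousOn y (Icc a b))
    (hy' : ∀ t ∈ Ico a b, HasDerivWithinAt y (y' t) (Ici t) t)
    (hdiss : ∀ t ∈ Ico a b, y' t ≤ -‖(K.orthogonalProjectionOnto (g t) : H)‖ ^ 2)
    (hKLchi : ∀ t ∈ Ico a b, y t ≤ ‖g t‖ ^ 2)
    (htail : ∀ t ∈ Ico a b, ‖g t - K.orthogonalProjectionOnto (g t)‖ ≤ η) :
    ∀ t ∈ Icc a b, y t ≤ y a * exp (-(t - a)) + η ^ 2 * (1 - exp (-(t - a))) := by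
  have hdecay : ∀ t ∈ Ico a b, y' t ≤ -1 * (y t - η ^ 2) := fun t ht ↦ by
    linarith [hdiss t ht, hKLchi t ht,
      norm_sq_le_of_norm_sub_orthogonalProjectionOnto_le K (htail t ht)]
  simpa only [neg_one_mul] using
    le_mul_exp_add_mul_one_sub_exp_of_deriv_right_le hy hy' hdecay

end

/-- Proposition 1, analytic content: if `y′(t) ≤ −‖Π g(t)‖²`,
`y(t) ≤ ‖g(t)‖²` and `‖g(t) − Π g(t)‖ ≤ η` for all `t ≥ 0`, where `Π` is the
orthogonal projection onto a complete subspace, then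
`y(t) ≤ y(0) e^{−t} + η² (1 − e^{−t})`. -/
theorem kswgd_truncated_convergence
    {H : Type*} [NormedAddCommGroup H] [InnerProductSpace ℝ H]
    (K : Submodule ℝ H) [CompleteSpace K]
    (η : ℝ) (hη : 0 ≤ η)
    (g : ℝ → H) (y : ℝ → ℝ) (hy : Differentiable ℝ y)
    (hdiss : ∀ t, 0 ≤ t → deriv y t ≤ -‖(Submodule.orthogonalProjectionOnto K (g t) : H)‖ ^ 2)
    (hKLchi : ∀ t, 0 ≤ t → y t ≤ ‖g t‖ ^ 2)
    (htail : ∀ t, 0 ≤ t → ‖g t - (Submodule.orthogonalProjectionOnto K (g t) : H)‖ ≤ η) :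
    ∀ t, 0 ≤ t →
      y t ≤ y 0 * Real.exp (-t) + η ^ 2 * (1 - Real.exp (-t)) := fun t ht ↦ by
  simpa only [sub_zero] using kswgd_truncated_convergence_general K hy.continuous.continuousOn
    (fun s _ ↦ (hy s).hasDerivAt.hasDerivWithinAt) (fun s hs ↦ hdiss s hs.1)
    (fun s hs ↦ hKLchi s hs.1) (fun s hs ↦ htail s hs.1) t (Set.right_mem_Icc.2 ht)
end

section
/- Let H be a real inner product space, Π the orthogonal projection onto a complete subspace of H, η ≥ 0, 0 ≤ ε < 1, g : [0, ∞) → H, δ : [0, ∞) → H, and y : [0, ∞) → ℝ differentiable. Assume for all t ≥ 0: (i) y′(t) ≤ −⟨g(t), Π g(t)⟩ − ⟨g(t), δ(t)⟩, (ii) |⟨g(t), δ(t)⟩| ≤ ε ‖g(t)‖², (iii) ‖g(t) − Π g(t)‖ ≤ η, and (iv) y(t) ≤ ‖g(t)‖². Then for every t ≥ 0, y(t) ≤ e^{−(1−ε) t}·y(0) + (η²/(1−ε))·(1 − e^{−(1−ε) t}). -/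
/-!
By Pythagoras, `⟪g, Π g⟫ = ‖g‖² - ‖g - Π g‖²`, so a spectral tail of size at most `η` costs `η²`
in the dissipation and the perturbation `δ` costs the fraction `ε` of `‖g‖²`. What survives,
`-(1 - ε) ‖g‖² + η²`, is at most `-(1 - ε) y + η²` because `y ≤ ‖g‖²`, and Grönwall's inequality
with negative rate `-(1 - ε)` integrates `y' ≤ -(1 - ε) y + η²`.
-/

open Set RCLike

section Dissipation

variable {𝕜 H : Type*} [RCLike 𝕜] [NormedAddCommGroup H] [InnerProductSpace 𝕜 H]
  (K : Submodule 𝕜 H) [K.HasOrthogonalProjection]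

lemma re_inner_self_starProjection_eq_norm_sq_sub (v : H) :
    re (inner 𝕜 v (K.starProjection v)) = ‖v‖ ^ 2 - ‖v - K.starProjection v‖ ^ 2 := by
  have pythagoras : ‖v‖ ^ 2 = ‖K.starProjection v‖ ^ 2 + ‖v - K.starProjection v‖ ^ 2 := by
    rw [← K.starProjection_orthogonal_val]
    exact K.norm_sq_eq_add_norm_sq_starProjection v
  rw [inner_re_symm, K.re_inner_starProjection_eq_normSq]
  exact eq_sub_of_add_eq pythagoras.symm

lemma neg_re_inner_starProjection_sub_re_inner_le {v w : H} {ε η : ℝ}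
    (hw : -re (inner 𝕜 v w) ≤ ε * ‖v‖ ^ 2) (hv : ‖v - K.starProjection v‖ ≤ η) :
    -re (inner 𝕜 v (K.starProjection v)) - re (inner 𝕜 v w) ≤ -(1 - ε) * ‖v‖ ^ 2 + η ^ 2 := by
  have tail_sq : ‖v - K.starProjection v‖ ^ 2 ≤ η ^ 2 := by gcongr
  rw [re_inner_self_starProjection_eq_norm_sq_sub]
  linarith

end Dissipation

lemma le_gronwallBound_of_hasDerivWithinAt_right_le {f f' : ℝ → ℝ} {K ε a : ℝ}
    (hf : ContinuousOn f (Ici a)) (hf' : ∀ x, a ≤ x → HasDerivWithinAt f (f' x) (Ici x) x)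
    (bound : ∀ x, a ≤ x → f' x ≤ K * f x + ε) {x : ℝ} (hx : a ≤ x) :
    f x ≤ gronwallBound (f a) K ε (x - a) :=
  le_gronwallBound_of_liminf_deriv_right_le (hf.mono Icc_subset_Ici_self)
    (fun z hz _ hr ↦ (hf' z hz.1).liminf_right_slope_le hr) le_rfl
    (fun z hz ↦ bound z hz.1) x (right_mem_Icc.mpr hx)

lemma gronwallBound_neg_of_ne_zero {c : ℝ} (hc : c ≠ 0) (δ ε x : ℝ) :
    gronwallBound δ (-c) ε x = Real.exp (-c * x) * δ + ε / c * (1 - Real.exp (-c * x)) := by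
  rw [gronwallBound_of_K_ne_0 (neg_ne_zero.mpr hc)]
  ring

theorem kswgd_data_driven_error_bound_general
    {𝕜 H : Type*} [RCLike 𝕜] [NormedAddCommGroup H] [InnerProductSpace 𝕜 H]
    (K : Submodule 𝕜 H) [K.HasOrthogonalProjection] {η ε : ℝ} (hε : ε < 1)
    {g δ : ℝ → H} {y y' : ℝ → ℝ} (hy : ContinuousOn y (Ici 0))
    (hy' : ∀ t, 0 ≤ t → HasDerivWithinAt y (y' t) (Ici t) t)
    (hdiss : ∀ t, 0 ≤ t →
      y' t ≤ -re (inner 𝕜 (g t) (K.starProjection (g t))) - re (inner 𝕜 (g t) (δ t)))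
    (hδ : ∀ t, 0 ≤ t → -re (inner 𝕜 (g t) (δ t)) ≤ ε * ‖g t‖ ^ 2)
    (htail : ∀ t, 0 ≤ t → ‖g t - K.starProjection (g t)‖ ≤ η)
    (hKLchi : ∀ t, 0 ≤ t → y t ≤ ‖g t‖ ^ 2) {t : ℝ} (ht : 0 ≤ t) :
    y t ≤ Real.exp (-(1 - ε) * t) * y 0
          + (η ^ 2 / (1 - ε)) * (1 - Real.exp (-(1 - ε) * t)) := by
  have rate_pos : 0 < 1 - ε := sub_pos.mpr hε
  have deriv_le : ∀ s, 0 ≤ s → y' s ≤ -(1 - ε) * y s + η ^ 2 := fun s hs ↦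
    calc
      y' s ≤ -re (inner 𝕜 (g s) (K.starProjection (g s))) - re (inner 𝕜 (g s) (δ s)) := hdiss s hs
      _ ≤ -(1 - ε) * ‖g s‖ ^ 2 + η ^ 2 :=
        neg_re_inner_starProjection_sub_re_inner_le K (hδ s hs) (htail s hs)
      _ ≤ -(1 - ε) * y s + η ^ 2 := by
        gcongr ?_ + _
        exact mul_le_mul_of_nonpos_left (hKLchi s hs) (neg_nonpos.mpr rate_pos.le)
  calc
    y t ≤ gronwallBound (y 0) (-(1 - ε)) (η ^ 2) (t - 0) :=
      le_gronwallBound_of_hasDerivWithinAt_right_le hy hy' deriv_le ht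
    _ = _ := by rw [sub_zero, gronwallBound_neg_of_ne_zero rate_pos.ne']

/-- Theorem 1, analytic content: if `y′(t) ≤ −⟨g(t), Π g(t)⟩ − ⟨g(t), δ(t)⟩`,
`|⟨g(t), δ(t)⟩| ≤ ε ‖g(t)‖²`, `‖g(t) − Π g(t)‖ ≤ η`, and `y(t) ≤ ‖g(t)‖²` for all `t ≥ 0`,
with `0 ≤ ε < 1` and `η ≥ 0`, then
`y(t) ≤ e^{−(1−ε)t} y(0) + (η²/(1−ε)) (1 − e^{−(1−ε)t})`. -/
theorem kswgd_data_driven_error_bound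
    {H : Type*} [NormedAddCommGroup H] [InnerProductSpace ℝ H]
    (K : Submodule ℝ H) [CompleteSpace K]
    (η ε : ℝ) (hη : 0 ≤ η) (hε0 : 0 ≤ ε) (hε1 : ε < 1)
    (g δ : ℝ → H) (y : ℝ → ℝ) (hy : Differentiable ℝ y)
    (hdiss : ∀ t, 0 ≤ t →
      deriv y t ≤ -(inner ℝ (g t) ((K.orthogonalProjectionOnto (g t) : H)) : ℝ)
                    - (inner ℝ (g t) (δ t) : ℝ))
    (hδ : ∀ t, 0 ≤ t → |(inner ℝ (g t) (δ t) : ℝ)| ≤ ε * ‖g t‖ ^ 2)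
    (htail : ∀ t, 0 ≤ t → ‖g t - (K.orthogonalProjectionOnto (g t) : H)‖ ≤ η)
    (hKLchi : ∀ t, 0 ≤ t → y t ≤ ‖g t‖ ^ 2) :
    ∀ t, 0 ≤ t →
      y t ≤ Real.exp (-(1 - ε) * t) * y 0
            + (η ^ 2 / (1 - ε)) * (1 - Real.exp (-(1 - ε) * t)) :=
  fun _ ht ↦ kswgd_data_driven_error_bound_general K hε1 hy.continuous.continuousOn
    (fun s _ ↦ (hy s).hasDerivAt.hasDerivWithinAt) hdiss
    (fun s hs ↦ (neg_le_abs _).trans (hδ s hs)) htail hKLchi ht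
end
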